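/- arXiv:2012.14525 — 3 statements merged into one kernel-verified Lean document; each statement's English description precedes it below -/
import Mathlib

section
/- Let X be a finite set of n points in ℝ² with the L1 metric, n ≥ 2. If no line induced by a pair of distinct points of X is universal, then the number of distinct lines induced by pairs of distinct points of X is at least ⌈n/2⌉. -/
noncomputable section
open Classical

/-- The L1 (Manhattan) metric on ℝ². -/
def rho (u v : ℝ × ℝ) : ℝ := |u.1 - v.1| + |u.2 - v.2|

/-- `z` is between `u` and `v` (w.r.t. the L1 metric): the three points are
pairwise distinct and `ρ(u,v) = ρ(u,z) + ρ(z,v)`. -/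
def MBtw (u z v : ℝ × ℝ) : Prop :=
  u ≠ z ∧ z ≠ v ∧ u ≠ v ∧ rho u v = rho u z + rho z v

/-- The line of `X` induced by distinct points `u, v`: all `z ∈ X` such that
`z ∈ {u,v}` or one of `u, v, z` is between the other two. -/
def lineThrough (X : Finset (ℝ × ℝ)) (u v : ℝ × ℝ) : Finset (ℝ × ℝ) :=
  X.filter fun z => z = u ∨ z = v ∨ MBtw u z v ∨ MBtw z u v ∨ MBtw u v z

/-- The number of distinct lines induced by pairs of distinct points of `X`. -/
def numLines (X : Finset (ℝ × ℝ)) : ℕ :=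
  (((X ×ˢ X).filter fun p => p.1 ≠ p.2).image fun p => lineThrough X p.1 p.2).card

/-!
Let `p` be the lowest of the leftmost points, and count the lines through `p` and the lines avoiding
`p` separately. The points strictly north-east of `p` fall into classes according to the line that
they span with `p`; points of one class are comparable in the product order to the same points,
except possibly for points south-east of `p`. If two of them are comparable to exactly the same
points, they are twins, and the upper one is charged to a line avoiding `p`, which joins it to an
extremal point incomparable to it. Points of a class that are not twins are separated by points
south-east of `p`. The first and the last of them are charged to the line of the class, and each of
the others to a line that joins it to a later point of the class; this line also contains `p`, but
some points south-east of `p` lie on it and some do not, so it is not the line of a class.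

The points south-east of `p` are treated in the same way after a reflection, and those straight
above or to the right of `p` are charged to the line through `p`. Each line through `p` is charged
at most twice and each line avoiding `p` at most once, and some line avoids `p`, which pays for `p`
itself. This needs points on both sides of `p`. If there are none to the south-east, no class
contains two points that are not twins, and no line is at the same time spanned by `p` with a point
straight above, a point to the right and a point north-east of it.
-/

namespace BoxPlane

open OrderDual Set Relator

section Relations

variable {γ δ : Type*}

theorem leftUnique_sup {A B : γ → δ → Prop} (hA : LeftUnique A) (hB : LeftUnique B)
    (hAB : ∀ a b l, A a l → ¬ B b l) : LeftUnique (A ⊔ B) := by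
  rintro a b l (ha | ha) (hb | hb)
  · exact hA ha hb
  · exact absurd hb (hAB a b l ha)
  · exact absurd ha (hAB b a l hb)
  · exact hB ha hb

theorem ncard_le_of_leftUnique [Nonempty δ] {R : γ → δ → Prop} {T : Set δ} (hR : LeftUnique R)
    (hT : ∀ a l, R a l → l ∈ T) (hfin : T.Finite) : {a | ∃ l, R a l}.ncard ≤ T.ncard := by
  choose! f hf using fun (a : γ) (ha : ∃ l, R a l) => ha
  exact ncard_le_ncard_of_injOn f (fun a ha => hT a _ (hf a ha))
    (fun a ha b hb hab => hR (hf a ha) (hab ▸ hf b hb)) hfin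

theorem injOn_union_of_ne {f : γ → δ} {s t : Set γ} (hs : InjOn f s) (ht : InjOn f t)
    (hne : ∀ a ∈ s, ∀ b ∈ t, f a ≠ f b) : InjOn f (s ∪ t) :=
  (injOn_union (disjoint_left.2 fun a ha hb => hne a ha a hb rfl)).2 ⟨hs, ht, hne⟩

end Relations

variable {ι α β : Type*} [LinearOrder α] [LinearOrder β]

section Definitions

variable (x : ι → α) (y : ι → β)

/-- Weak L1 betweenness: `b` lies in the axis-parallel box spanned by `a` and `c`. Points are
indices in `ι`, with coordinates `x` and `y`, so that a reflection only replaces `y` by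
`toDual ∘ y` and leaves the type of points unchanged. -/
def InBox (a b c : ι) : Prop := x b ∈ uIcc (x a) (x c) ∧ y b ∈ uIcc (y a) (y c)

/-- The L1 line through `u` and `v`. -/
def boxLine (u v : ι) : Set ι := {w | InBox x y u w v ∨ InBox x y w u v ∨ InBox x y u v w}

/-- The lines induced by pairs of distinct points. -/
def boxLines : Set (Set ι) := {l | ∃ u v, u ≠ v ∧ l = boxLine x y u v}

/-- Every line misses some point. -/
def NoUniversalLine : Prop := ∀ u v, u ≠ v → boxLine x y u v ≠ univ

/-- Comparability in the product order. Over `toDual ∘ y` in place of `y` it says that one of the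
points lies weakly to the north-west of the other. -/
def Comparable (a b : ι) : Prop := (x a ≤ x b ∧ y a ≤ y b) ∨ (x b ≤ x a ∧ y b ≤ y a)

/-- The points strictly to the north-east of `p`. -/
def neQuadrant (p : ι) : Set ι := {a | x p < x a ∧ y p < y a}

/-- The points strictly to the south-east of `p`. -/
def seQuadrant (p : ι) : Set ι := {a | x p < x a ∧ y a < y p}

/-- The points straight above `p`; those straight to the right of `p` form `column y x p`. -/
def column (p : ι) : Set ι := {a | x a = x p ∧ y p < y a}

/-- The points north-east of `p` with a lower twin: a point of the same quadrant strictly below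
and to the left of them that is comparable to the same points. -/
def upperTwins (p : ι) : Set ι :=
  {z | z ∈ neQuadrant x y p ∧ ∃ z₀ ∈ neQuadrant x y p, x z₀ < x z ∧ y z₀ < y z ∧
    ∀ w, Comparable x y z₀ w ↔ Comparable x y z w}

/-- The points north-east of `p` without a lower twin. They fall into classes according to the
line that they span with `p`. -/
def core (p : ι) : Set ι := neQuadrant x y p \ upperTwins x y p

/-- The points of the core that come first in their class. -/
def firsts (p : ι) : Set ι :=
  {z ∈ core x y p | ∀ c ∈ core x y p, boxLine x y p c = boxLine x y p z → x z ≤ x c}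

/-- The points of the core that come last, but not first, in their class. -/
def lasts (p : ι) : Set ι :=
  {z ∈ core x y p | (∀ c ∈ core x y p, boxLine x y p c = boxLine x y p z → x c ≤ x z) ∧
    ∃ a ∈ core x y p, boxLine x y p a = boxLine x y p z ∧ x a < x z}

/-- The points `a`, `z`, `b` of the core occur in this order in one class. -/
structure ClassTriple (p a z b : ι) : Prop where
  fst_mem : a ∈ core x y p
  mid_mem : z ∈ core x y p
  snd_mem : b ∈ core x y p
  fst_line : boxLine x y p a = boxLine x y p z
  snd_line : boxLine x y p z = boxLine x y p b
  fst_lt : x a < x z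
  lt_snd : x z < x b

/-- `l` joins `z`, which is neither first nor last in its class, to a later point of the class. -/
def IsMiddleLine (p z : ι) (l : Set ι) : Prop :=
  ∃ a b, ClassTriple x y p a z b ∧ l = boxLine x y z b

/-- `l` joins `p` to `z ∈ S`. -/
def IsBaseLine (p : ι) (S : Set ι) (z : ι) (l : Set ι) : Prop := z ∈ S ∧ l = boxLine x y p z

/-- `w` is the lowest point north-west of `z` or, if there is no such point, the leftmost point
south-east of `z`. -/
def IsPartner (z w : ι) : Prop :=
  (z ∈ seQuadrant x y w ∧ ∀ q, z ∈ seQuadrant x y q → y w ≤ y q) ∨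
  ((∀ q, z ∉ seQuadrant x y q) ∧ w ∈ seQuadrant x y z ∧ ∀ q ∈ seQuadrant x y z, x w ≤ x q)

/-- `l` joins the upper twin `z` to its partner. -/
def IsTwinLine (p z : ι) (l : Set ι) : Prop :=
  z ∈ upperTwins x y p ∧ ∃ w, IsPartner x y z w ∧ l = boxLine x y w z

/-- The lines that contain `p`. -/
def linesThrough (p : ι) : Set (Set ι) := {l ∈ boxLines x y | p ∈ l}

/-- The lines that do not contain `p`. -/
def linesAvoiding (p : ι) : Set (Set ι) := {l ∈ boxLines x y | p ∉ l}

end Definitions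

variable {x : ι → α} {y : ι → β} {p u v w z z' : ι} {l : Set ι}

@[grind =]
theorem mem_boxLine : w ∈ boxLine x y u v ↔
    InBox x y u w v ∨ InBox x y w u v ∨ InBox x y u v w := Iff.rfl

@[grind =]
theorem inBox_iff {a b c : ι} : InBox x y a b c ↔
    ((x a ≤ x b ∧ x b ≤ x c) ∨ (x c ≤ x b ∧ x b ≤ x a)) ∧
    ((y a ≤ y b ∧ y b ≤ y c) ∨ (y c ≤ y b ∧ y b ≤ y a)) := by
  simp only [InBox, mem_uIcc]

@[grind =]
theorem mem_neQuadrant : z ∈ neQuadrant x y p ↔ x p < x z ∧ y p < y z := Iff.rfl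

@[grind =]
theorem mem_seQuadrant : z ∈ seQuadrant x y p ↔ x p < x z ∧ y z < y p := Iff.rfl

omit [LinearOrder α] in
@[grind =]
theorem mem_column : z ∈ column x y p ↔ x z = x p ∧ y p < y z := Iff.rfl

theorem neQuadrant_toDual : neQuadrant x (toDual ∘ y) p = seQuadrant x y p := rfl

theorem seQuadrant_toDual : seQuadrant x (toDual ∘ y) p = neQuadrant x y p := rfl

/-! ### Lines -/

theorem inBox_toDual {a b c : ι} : InBox x (toDual ∘ y) a b c ↔ InBox x y a b c := by
  simp only [inBox_iff, Function.comp_apply, toDual_le_toDual]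
  exact and_congr_right fun _ => by rw [or_comm, and_comm, and_comm (a := y b ≤ y a)]

theorem boxLine_toDual : boxLine x (toDual ∘ y) = boxLine x y := by
  simp only [funext_iff, boxLine, inBox_toDual, implies_true]

theorem boxLine_swap : boxLine y x = boxLine x y := by
  ext u v w
  simp only [mem_boxLine, InBox, and_comm]

theorem boxLine_comm (u v : ι) : boxLine x y u v = boxLine x y v u := by
  ext w
  grind

theorem left_mem_boxLine (u v : ι) : u ∈ boxLine x y u v := by grind

theorem right_mem_boxLine (u v : ι) : v ∈ boxLine x y u v := by grind

theorem mem_boxLine_rotate : w ∈ boxLine x y u v ↔ u ∈ boxLine x y v w := by grind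

theorem mem_boxLine_of_lt_of_lt (hx : x u < x v) (hy : y u < y v) :
    w ∈ boxLine x y u v ↔ Comparable x y u w ∧ Comparable x y v w := by
  grind [Comparable]

theorem mem_boxLine_of_lt_of_gt (hx : x u < x v) (hy : y v < y u) :
    w ∈ boxLine x y u v ↔
      Comparable x (toDual ∘ y) u w ∧ Comparable x (toDual ∘ y) v w := by
  rw [← boxLine_toDual, mem_boxLine_of_lt_of_lt (y := toDual ∘ y) hx (toDual_lt_toDual.2 hy)]

theorem mem_boxLine_of_eq_of_lt (hx : x u = x v) (hy : y u < y v) :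
    w ∈ boxLine x y u v ↔ x w = x u ∨ y w ≤ y u ∨ y v ≤ y w := by
  grind

theorem mem_boxLine_of_lt_of_eq (hx : x u < x v) (hy : y u = y v) :
    w ∈ boxLine x y u v ↔ y w = y u ∨ x w ≤ x u ∨ x v ≤ x w := by
  rw [← boxLine_swap, mem_boxLine_of_eq_of_lt hy hx]

theorem comparable_comm : Comparable x y z w ↔ Comparable x y w z := or_comm

theorem comparable_refl (z : ι) : Comparable x y z z := Or.inl ⟨le_rfl, le_rfl⟩

theorem NoUniversalLine.toDual (h : NoUniversalLine x y) :
    NoUniversalLine x (toDual ∘ y) := by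
  simpa only [NoUniversalLine, boxLine_toDual] using h

theorem NoUniversalLine.swap (h : NoUniversalLine x y) : NoUniversalLine y x :=
  fun u v huv => by
    rw [boxLine_swap]
    exact h u v huv

theorem NoUniversalLine.exists_notMem (h : NoUniversalLine x y) (huv : u ≠ v) :
    ∃ w, w ∉ boxLine x y u v :=
  (ne_univ_iff_exists_notMem _).1 (h u v huv)

-- The line through two indices with the same coordinates is universal.
theorem NoUniversalLine.eq_of_coords (h : NoUniversalLine x y) (hx : x u = x v) (hy : y u = y v) :
    u = v := by
  by_contra huv
  obtain ⟨w, hw⟩ := h.exists_notMem huv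
  grind

/-! ### Lines through the leftmost point -/

section BaseLines

theorem mem_boxLine_iff_of_mem_neQuadrant (hp : ∀ w, x p ≤ x w) (hz : z ∈ neQuadrant x y p) :
    w ∈ boxLine x y p z ↔ w ∉ seQuadrant x y p ∧ Comparable x y z w := by
  have := hp w
  grind [Comparable]

theorem disjoint_boxLine_seQuadrant (hp : ∀ w, x p ≤ x w) (hz : z ∈ neQuadrant x y p) :
    Disjoint (boxLine x y p z) (seQuadrant x y p) :=
  disjoint_left.2 fun _ hw => ((mem_boxLine_iff_of_mem_neQuadrant hp hz).1 hw).1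

theorem disjoint_boxLine_neQuadrant (hp : ∀ w, x p ≤ x w) (hz : z ∈ seQuadrant x y p) :
    Disjoint (boxLine x y p z) (neQuadrant x y p) := by
  rw [← boxLine_toDual, ← seQuadrant_toDual]
  exact disjoint_boxLine_seQuadrant hp hz

theorem disjoint_neQuadrant_seQuadrant :
    Disjoint (neQuadrant x y p) (seQuadrant x y p) :=
  disjoint_left.2 fun _ h h' => lt_asymm h.2 h'.2

theorem boxLine_eq_boxLine_iff (hp : ∀ w, x p ≤ x w) (hz : z ∈ neQuadrant x y p)
    (hz' : z' ∈ neQuadrant x y p) : boxLine x y p z = boxLine x y p z' ↔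
      ∀ w ∉ seQuadrant x y p, (Comparable x y z w ↔ Comparable x y z' w) := by
  simp only [Set.ext_iff, mem_boxLine_iff_of_mem_neQuadrant hp hz,
    mem_boxLine_iff_of_mem_neQuadrant hp hz', and_congr_right_iff]

theorem comparable_seQuadrant_iff {d : ι} (hz : z ∈ neQuadrant x y p)
    (hd : d ∈ seQuadrant x y p) : Comparable x y z d ↔ x d ≤ x z := by
  grind [Comparable]

theorem comparable_of_boxLine_eq (hp : ∀ w, x p ≤ x w) (hz : z ∈ neQuadrant x y p)
    (hz' : z' ∈ neQuadrant x y p) (h : boxLine x y p z = boxLine x y p z') :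
    Comparable x y z z' :=
  ((boxLine_eq_boxLine_iff hp hz hz').1 h z' (disjoint_neQuadrant_seQuadrant.notMem_of_mem_left
    hz')).2 (comparable_refl z')

theorem lt_and_lt_of_forall_comparable_iff (h : NoUniversalLine x y) (hne : u ≠ v)
    (hx : x u ≤ x v) (hy : y u ≤ y v) (huv : ∀ w, Comparable x y u w ↔ Comparable x y v w) :
    x u < x v ∧ y u < y v := by
  obtain ⟨q, hq⟩ := h.exists_notMem hne
  have := huv q
  grind [Comparable]

/-- Two core points of one class are not twins, and only a point of the south-east quadrant can
distinguish them. -/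
theorem exists_seQuadrant_between (h : NoUniversalLine x y) (hp : ∀ w, x p ≤ x w)
    (hz : z ∈ core x y p) (hz' : z' ∈ core x y p) (hl : boxLine x y p z = boxLine x y p z')
    (hne : z ≠ z') (hx : x z ≤ x z') : ∃ d ∈ seQuadrant x y p, x z < x d ∧ x d ≤ x z' := by
  by_contra! hcon
  have htwin : ∀ w, Comparable x y z w ↔ Comparable x y z' w := by
    intro w
    by_cases hw : w ∈ seQuadrant x y p
    · rw [comparable_seQuadrant_iff hz.1 hw, comparable_seQuadrant_iff hz'.1 hw]
      exact ⟨fun hwz => hwz.trans hx, fun hwz' => not_lt.1 fun hzw => (hcon w hw hzw).not_ge hwz'⟩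
    · exact (boxLine_eq_boxLine_iff hp hz.1 hz'.1).1 hl w hw
  rcases comparable_of_boxLine_eq hp hz.1 hz'.1 hl with ⟨hx, hy⟩ | ⟨hx, hy⟩
  · have hlt := lt_and_lt_of_forall_comparable_iff h hne hx hy htwin
    exact hz'.2 ⟨hz'.1, z, hz.1, hlt.1, hlt.2, htwin⟩
  · have hlt := lt_and_lt_of_forall_comparable_iff h hne.symm hx hy fun w => (htwin w).symm
    exact hz.2 ⟨hz.1, z', hz'.1, hlt.1, hlt.2, fun w => (htwin w).symm⟩

theorem eq_of_boxLine_eq (h : NoUniversalLine x y) (hp : ∀ w, x p ≤ x w) (hz : z ∈ core x y p)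
    (hz' : z' ∈ core x y p) (hl : boxLine x y p z = boxLine x y p z') (hx : x z = x z') :
    z = z' := by
  by_contra hne
  obtain ⟨d, -, hzd, hdz'⟩ := exists_seQuadrant_between h hp hz hz' hl hne hx.le
  exact (hzd.trans_le hdz').ne hx

theorem injOn_firsts (h : NoUniversalLine x y) (hp : ∀ w, x p ≤ x w) :
    InjOn (boxLine x y p) (firsts x y p) := fun z hz z' hz' hl =>
  eq_of_boxLine_eq h hp hz.1 hz'.1 hl
    (le_antisymm (hz.2 z' hz'.1 hl.symm) (hz'.2 z hz.1 hl))

theorem injOn_lasts (h : NoUniversalLine x y) (hp : ∀ w, x p ≤ x w) :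
    InjOn (boxLine x y p) (lasts x y p) := fun z hz z' hz' hl =>
  eq_of_boxLine_eq h hp hz.1 hz'.1 hl
    (le_antisymm (hz'.2.1 z hz.1 hl) (hz.2.1 z' hz'.1 hl.symm))

theorem mem_firsts_or_mem_lasts_or_isMiddleLine (hz : z ∈ core x y p) :
    z ∈ firsts x y p ∨ z ∈ lasts x y p ∨ ∃ l, IsMiddleLine x y p z l := by
  by_cases hfirst : ∀ c ∈ core x y p, boxLine x y p c = boxLine x y p z → x z ≤ x c
  · exact Or.inl ⟨hz, hfirst⟩
  by_cases hlast : ∀ c ∈ core x y p, boxLine x y p c = boxLine x y p z → x c ≤ x z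
  · push Not at hfirst
    exact Or.inr (Or.inl ⟨hz, hlast, hfirst⟩)
  push Not at hfirst hlast
  obtain ⟨a, ha, hal, haz⟩ := hfirst
  obtain ⟨b, hb, hbl, hzb⟩ := hlast
  exact Or.inr (Or.inr ⟨_, a, b, ⟨ha, hz, hb, hal, hbl.symm, haz, hzb⟩, rfl⟩)

theorem injOn_column (h : NoUniversalLine x y) : InjOn (boxLine x y p) (column x y p) := by
  intro z hz z' hz' hl
  wlog hy : y z ≤ y z' generalizing z z'
  · exact (this hz' hz hl.symm (le_of_not_ge hy)).symm
  by_contra hne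
  have hx : x z = x z' := hz.1.trans hz'.1.symm
  have hlt : y z < y z' := hy.lt_of_ne fun hy => hne (h.eq_of_coords hx hy)
  obtain ⟨w, hw⟩ := h.exists_notMem hne
  rw [mem_boxLine_of_eq_of_lt hx hlt] at hw
  have hwl : w ∈ boxLine x y p z ↔ w ∈ boxLine x y p z' := by rw [hl]
  rw [mem_boxLine_of_eq_of_lt hz.1.symm hz.2, mem_boxLine_of_eq_of_lt hz'.1.symm hz'.2] at hwl
  grind

theorem injOn_row (h : NoUniversalLine x y) : InjOn (boxLine x y p) (column y x p) := by
  have := injOn_column (p := p) h.swap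
  rwa [boxLine_swap] at this

theorem boxLine_row_ne_lasts (h : NoUniversalLine x y) (hp : ∀ w, x p ≤ x w)
    (hz : z ∈ column y x p) (hz' : z' ∈ lasts x y p) : boxLine x y p z ≠ boxLine x y p z' := by
  intro hl
  obtain ⟨hz', -, c, hc, hcl, hcx⟩ := hz'
  obtain ⟨d, hd, hcd, -⟩ :=
    exists_seQuadrant_between h hp hc hz' hcl (fun hcz => hcx.ne (congrArg x hcz)) hcx.le
  have hzc : z ∈ boxLine x y p c := by rw [hcl, ← hl]; exact right_mem_boxLine p z
  have hxz : x z ≤ x c := by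
    have := ((mem_boxLine_iff_of_mem_neQuadrant hp hc.1).1 hzc).2
    have := hc.1
    grind [Comparable]
  have hdl : d ∈ boxLine x y p z :=
    (mem_boxLine_of_lt_of_eq hz.2 hz.1.symm).2 (Or.inr (Or.inr (hxz.trans hcd.le)))
  exact disjoint_left.1 (disjoint_boxLine_seQuadrant hp hz'.1) (hl ▸ hdl) hd

end BaseLines

/-! ### Lines of the middle points of a class -/

section MiddleLines

variable {a b d q a' b' : ι}

/-- Whatever is comparable to a point between `a` and `b` is comparable to one of them, hence,
if `a` and `b` are in one class, to both. -/
theorem comparable_of_le_of_le (hp : ∀ w, x p ≤ x w) (ha : a ∈ neQuadrant x y p)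
    (hb : b ∈ neQuadrant x y p) (hl : boxLine x y p a = boxLine x y p b)
    (haz : x a ≤ x z ∧ y a ≤ y z) (hzb : x z ≤ x b ∧ y z ≤ y b) (hw : w ∉ seQuadrant x y p)
    (hzw : Comparable x y z w) : Comparable x y a w ∧ Comparable x y b w := by
  have := (boxLine_eq_boxLine_iff hp ha hb).1 hl w hw
  grind [Comparable]

theorem le_of_comparable_of_lt (h : Comparable x y u v) (hx : x u < x v) : y u ≤ y v := by
  grind [Comparable]

theorem ClassTriple.snd_le (hp : ∀ w, x p ≤ x w) (t : ClassTriple x y p a z b) : y z ≤ y b :=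
  le_of_comparable_of_lt (comparable_of_boxLine_eq hp t.mid_mem.1 t.snd_mem.1 t.snd_line) t.lt_snd

theorem ClassTriple.mem_of_le (hp : ∀ w, x p ≤ x w) (t : ClassTriple x y p a z b)
    (hd : d ∈ seQuadrant x y p) (hdz : x d ≤ x z) : d ∈ boxLine x y z b := by
  have := t.mid_mem.1
  have := t.snd_le hp
  have := t.lt_snd
  grind

theorem ClassTriple.notMem_of_lt_of_lt (hp : ∀ w, x p ≤ x w) (t : ClassTriple x y p a z b)
    (hd : d ∈ seQuadrant x y p) (hzd : x z < x d) (hdb : x d < x b) : d ∉ boxLine x y z b := by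
  have := t.mid_mem.1
  have := t.snd_le hp
  grind

theorem ClassTriple.comparable_of_mem (hp : ∀ w, x p ≤ x w) (t : ClassTriple x y p a z b)
    (hq : q ∈ boxLine x y z b) (hzq : x z ≤ x q) (hqb : x q < x b) : Comparable x y z q := by
  have := t.snd_le hp
  grind [Comparable]

theorem ClassTriple.exists_seQuadrant_left (h : NoUniversalLine x y) (hp : ∀ w, x p ≤ x w)
    (t : ClassTriple x y p a z b) : ∃ d ∈ seQuadrant x y p, x a < x d ∧ x d ≤ x z :=
  exists_seQuadrant_between h hp t.fst_mem t.mid_mem t.fst_line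
    (fun haz => t.fst_lt.ne (congrArg x haz)) t.fst_lt.le

theorem ClassTriple.exists_seQuadrant_notMem (h : NoUniversalLine x y) (hp : ∀ w, x p ≤ x w)
    (t : ClassTriple x y p a z b) :
    ∃ d ∈ seQuadrant x y p, x z < x d ∧ x d ≤ x b ∧ d ∉ boxLine x y z b := by
  have hne : z ≠ b := fun hzb => t.lt_snd.ne (congrArg x hzb)
  have hz := t.mid_mem.1
  rcases (t.snd_le hp).lt_or_eq with hy | hy
  · obtain ⟨d, hd, hzd, hdb⟩ :=
      exists_seQuadrant_between h hp t.mid_mem t.snd_mem t.snd_line hne t.lt_snd.le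
    exact ⟨d, hd, hzd, hdb, by grind⟩
  · obtain ⟨d, hd⟩ := h.exists_notMem hne
    have hbox := hd
    rw [mem_boxLine_of_lt_of_eq t.lt_snd hy] at hbox
    push Not at hbox
    refine ⟨d, ?_, hbox.2.1, hbox.2.2.le, hd⟩
    by_contra hse
    have := (boxLine_eq_boxLine_iff hp hz t.snd_mem.1).1 t.snd_line d hse
    grind [Comparable]

theorem ClassTriple.lt_of_boxLine_eq (h : NoUniversalLine x y) (hp : ∀ w, x p ≤ x w)
    (t : ClassTriple x y p a z b) (t' : ClassTriple x y p a' z' b')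
    (hl : boxLine x y z b = boxLine x y z' b') : x a' < x z ∧ x z' < x b := by
  have hb : x z' < x b := by
    obtain ⟨d, hd, -, hdb, hdl⟩ := t.exists_seQuadrant_notMem h hp
    refine lt_of_lt_of_le (lt_of_not_ge fun hdz' => hdl ?_) hdb
    exact hl ▸ t'.mem_of_le hp hd hdz'
  refine ⟨?_, hb⟩
  obtain ⟨d, hd, had, hdz'⟩ := t'.exists_seQuadrant_left h hp
  refine had.trans_le (le_of_not_gt fun hzd => ?_)
  exact t.notMem_of_lt_of_lt hp hd hzd (hdz'.trans_lt hb) (hl ▸ t'.mem_of_le hp hd hdz')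

/-- Up to symmetry `a' ≤ z ≤ z' ≤ b` in the product order, so that the two classes coincide. -/
theorem ClassTriple.boxLine_eq_of_boxLine_eq (h : NoUniversalLine x y) (hp : ∀ w, x p ≤ x w)
    (t : ClassTriple x y p a z b) (t' : ClassTriple x y p a' z' b')
    (hl : boxLine x y z b = boxLine x y z' b') (hx : x z ≤ x z') (hy : x z = x z' → y z ≤ y z') :
    boxLine x y p z = boxLine x y p z' := by
  obtain ⟨haz, hzb⟩ := t.lt_of_boxLine_eq h hp t' hl
  have hz := t.mid_mem.1
  have hz' := t'.mid_mem.1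
  have notMem_se {q : ι} (hq : q ∈ neQuadrant x y p) : q ∉ seQuadrant x y p :=
    disjoint_neQuadrant_seQuadrant.notMem_of_mem_left hq
  have hzz' : Comparable x y z z' :=
    t.comparable_of_mem hp (hl ▸ left_mem_boxLine z' b') hx hzb
  have hle_az : y a' ≤ y z := le_of_comparable_of_lt
    (((boxLine_eq_boxLine_iff hp t'.fst_mem.1 hz').1 t'.fst_line z (notMem_se hz)).2
      (comparable_comm.1 hzz')) haz
  have hle_zz' : y z ≤ y z' :=
    hx.lt_or_eq.elim (le_of_comparable_of_lt hzz') hy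
  have hle_zb : y z' ≤ y b := le_of_comparable_of_lt (comparable_comm.1
    (((boxLine_eq_boxLine_iff hp hz t.snd_mem.1).1 t.snd_line z' (notMem_se hz')).1 hzz')) hzb
  refine (boxLine_eq_boxLine_iff hp hz hz').2 fun w hw => ⟨fun hzw => ?_, fun hzw => ?_⟩
  · exact (comparable_of_le_of_le hp t'.fst_mem.1 hz' t'.fst_line ⟨haz.le, hle_az⟩
      ⟨hx, hle_zz'⟩ hw hzw).2
  · exact (comparable_of_le_of_le hp hz t.snd_mem.1 t.snd_line ⟨hx, hle_zz'⟩
      ⟨hzb.le, hle_zb⟩ hw hzw).1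

theorem leftUnique_isMiddleLine (h : NoUniversalLine x y) (hp : ∀ w, x p ≤ x w) :
    LeftUnique (IsMiddleLine x y p) := by
  rintro z z' l ⟨a, b, t, rfl⟩ ⟨a', b', t', hl⟩
  wlog hlex : x z < x z' ∨ x z = x z' ∧ y z ≤ y z' generalizing a z b a' z' b'
  · exact (this a' b' t' a b t hl.symm (by grind)).symm
  have hx : x z ≤ x z' := hlex.elim le_of_lt fun hxy => hxy.1.le
  have hbase := t.boxLine_eq_of_boxLine_eq h hp t' hl hx (by grind)
  by_contra hne
  obtain ⟨d, hd, hzd, hdz'⟩ := exists_seQuadrant_between h hp t.mid_mem t'.mid_mem hbase hne hx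
  have hdb := hdz'.trans_lt (t.lt_of_boxLine_eq h hp t' hl).2
  exact t.notMem_of_lt_of_lt hp hd hzd hdb (hl ▸ t'.mem_of_le hp hd hdz')

theorem IsMiddleLine.mem (hl : IsMiddleLine x y p z l) : z ∈ l ∧ z ∈ neQuadrant x y p := by
  obtain ⟨a, b, t, rfl⟩ := hl
  exact ⟨left_mem_boxLine z b, t.mid_mem.1⟩

theorem IsMiddleLine.exists_mem_seQuadrant (h : NoUniversalLine x y) (hp : ∀ w, x p ≤ x w)
    (hl : IsMiddleLine x y p z l) : ∃ d ∈ l, d ∈ seQuadrant x y p := by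
  obtain ⟨a, b, t, rfl⟩ := hl
  obtain ⟨d, hd, -, hdz⟩ := t.exists_seQuadrant_left h hp
  exact ⟨d, t.mem_of_le hp hd hdz, hd⟩

theorem IsMiddleLine.not_seQuadrant_subset (h : NoUniversalLine x y) (hp : ∀ w, x p ≤ x w)
    (hl : IsMiddleLine x y p z l) : ¬ seQuadrant x y p ⊆ l := by
  obtain ⟨a, b, t, rfl⟩ := hl
  obtain ⟨d, hd, -, -, hdl⟩ := t.exists_seQuadrant_notMem h hp
  exact fun hsub => hdl (hsub hd)

theorem not_isMiddleLine_boxLine_row (h : NoUniversalLine x y) (hp : ∀ w, x p ≤ x w)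
    (hz : z ∈ column y x p) : ¬ IsMiddleLine x y p z' (boxLine x y p z) := by
  rintro ⟨a, b, t, hl⟩
  obtain ⟨d, hd, -, hdz'⟩ := t.exists_seQuadrant_left h hp
  obtain ⟨e, -, hz'e, -, hel⟩ := t.exists_seQuadrant_notMem h hp
  have hdl := t.mem_of_le hp hd hdz'
  rw [← hl, mem_boxLine_of_lt_of_eq hz.2 hz.1.symm] at hdl hel
  grind

theorem IsMiddleLine.mem_linesThrough (hl : IsMiddleLine x y p z l) :
    l ∈ linesThrough x y p := by
  obtain ⟨a, b, t, rfl⟩ := hl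
  refine ⟨⟨z, b, fun hzb => t.lt_snd.ne (congrArg x hzb), rfl⟩, mem_boxLine_rotate.1 ?_⟩
  rw [t.snd_line]
  exact right_mem_boxLine p b

end MiddleLines

/-! ### Lines of the twins -/

section TwinLines

variable {d q : ι}

theorem comparable_toDual : Comparable x (toDual ∘ y) u v ↔
    (x u ≤ x v ∧ y v ≤ y u) ∨ (x v ≤ x u ∧ y u ≤ y v) := Iff.rfl

theorem exists_isPartner [Finite ι] (h : NoUniversalLine x y) (hz : z ∈ upperTwins x y p) :
    ∃ w, IsPartner x y z w := by
  by_cases hnw : ∃ q, z ∈ seQuadrant x y q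
  · obtain ⟨w, hw, hmin⟩ := exists_min_image {q | z ∈ seQuadrant x y q} y (toFinite _) hnw
    exact ⟨w, Or.inl ⟨hw, hmin⟩⟩
  · obtain ⟨-, z₀, -, hx, hy, htwin⟩ := hz
    have hse : (seQuadrant x y z).Nonempty := by
      obtain ⟨q, hq⟩ := h.exists_notMem (fun hzz => hx.ne (congrArg x hzz))
      rw [mem_boxLine_of_lt_of_lt hx hy, htwin, and_self] at hq
      push Not at hnw
      have := hnw q
      exact ⟨q, by grind [Comparable]⟩
    obtain ⟨w, hw, hmin⟩ := exists_min_image (seQuadrant x y z) x (toFinite _) hse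
    exact ⟨w, Or.inr ⟨not_exists.1 hnw, hw, hmin⟩⟩

theorem IsPartner.mem_boxLine_iff (hw : IsPartner x y z w) : q ∈ boxLine x y w z ↔
    Comparable x (toDual ∘ y) w q ∧ Comparable x (toDual ∘ y) z q := by
  rcases hw with ⟨⟨hx, hy⟩, -⟩ | ⟨-, ⟨hx, hy⟩, -⟩
  · exact mem_boxLine_of_lt_of_gt hx hy
  · rw [boxLine_comm, mem_boxLine_of_lt_of_gt hx hy, and_comm]

theorem IsPartner.notMem_of_mem_neQuadrant_right (hw : IsPartner x y z w)
    (hz : z ∈ neQuadrant x y q) :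
    q ∉ boxLine x y w z := by
  rw [hw.mem_boxLine_iff, comparable_toDual, comparable_toDual]
  grind

theorem IsPartner.notMem_of_mem_neQuadrant_left (hw : IsPartner x y z w)
    (hq : q ∈ neQuadrant x y w) : q ∉ boxLine x y w z := by
  rw [hw.mem_boxLine_iff, comparable_toDual, comparable_toDual]
  grind

/-- The partner `w'` of `z'` lies weakly below the lower twin `z₀` of `z` and is not comparable to
it in the reflected order, so `w'` is strictly south-west of `z`. -/
theorem boxLine_ne_of_mem_seQuadrant {w' : ι} (hz : z ∈ upperTwins x y p)
    (hw : IsPartner x y z w) (hw' : IsPartner x y z' w') (hzz' : z' ∈ seQuadrant x y z) :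
    boxLine x y w z ≠ boxLine x y w' z' := by
  intro hl
  obtain ⟨-, z₀, -, hx, hy, htwin⟩ := hz
  have hz₀ : z₀ ∉ boxLine x y w' z' := hl ▸ hw.notMem_of_mem_neQuadrant_right ⟨hx, hy⟩
  have hz₀z' : z' ∈ seQuadrant x y z₀ := by
    have := htwin z'
    grind [Comparable]
  obtain ⟨hw'z', hmin⟩ : z' ∈ seQuadrant x y w' ∧ ∀ q, z' ∈ seQuadrant x y q → y w' ≤ y q :=
    hw'.resolve_right fun hcon => hcon.1 z hzz'
  have hw'z₀ := hmin z₀ hz₀z'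
  have hsw : z ∈ neQuadrant x y w' := by
    rw [hw'.mem_boxLine_iff, comparable_toDual, comparable_toDual] at hz₀
    grind
  exact hw'.notMem_of_mem_neQuadrant_left hsw (hl ▸ right_mem_boxLine w z)

/-- Were `q` above `u` and `v`, it would be comparable to the lower twin of `v`, which is comparable
to `u`, but not to `v`. -/
theorem mem_neQuadrant_of_notMem_of_lt_of_eq (hv : v ∈ upperTwins x y p) (hx : x u < x v)
    (hy : y u = y v) (hq : q ∉ boxLine x y u v) : v ∈ neQuadrant x y q := by
  obtain ⟨-, z₀, -, hx₀, hy₀, htwin⟩ := hv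
  have hu := htwin u
  have hq' := htwin q
  rw [mem_boxLine_of_lt_of_eq hx hy] at hq
  grind [Comparable]

theorem mem_neQuadrant_of_notMem_of_eq_of_lt (hv : v ∈ upperTwins x y p) (hx : x u = x v)
    (hy : y u < y v) (hq : q ∉ boxLine x y u v) : v ∈ neQuadrant x y q := by
  obtain ⟨-, z₀, -, hx₀, hy₀, htwin⟩ := hv
  have hu := htwin u
  have hq' := htwin q
  rw [mem_boxLine_of_eq_of_lt hx hy] at hq
  grind [Comparable]

theorem boxLine_ne_of_lt_of_eq {w' : ι} (h : NoUniversalLine x y) (hz' : z' ∈ upperTwins x y p)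
    (hw : IsPartner x y z w) (hw' : IsPartner x y z' w') (hx : x z < x z') (hy : y z = y z') :
    boxLine x y w z ≠ boxLine x y w' z' := by
  intro hl
  obtain ⟨q, hq⟩ := h.exists_notMem (fun hzz => hx.ne (congrArg x hzz))
  have hqz' := mem_neQuadrant_of_notMem_of_lt_of_eq hz' hx hy hq
  rw [mem_boxLine_of_lt_of_eq hx hy] at hq
  have hql : q ∉ boxLine x y w z := hl ▸ hw'.notMem_of_mem_neQuadrant_right hqz'
  have hz'l : z' ∈ boxLine x y w z := hl ▸ right_mem_boxLine w' z'
  rcases hw with hnw | ⟨hnw, hse, hmin⟩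
  · rw [IsPartner.mem_boxLine_iff (Or.inl hnw), comparable_toDual, comparable_toDual] at hql
    grind
  · have hwz' : z' ∈ neQuadrant x y w := by
      have := hmin q
      grind
    exact IsPartner.notMem_of_mem_neQuadrant_left (Or.inr ⟨hnw, hse, hmin⟩) hwz' hz'l

theorem notMem_boxLine_of_eq_of_lt (h : NoUniversalLine x y) (hz' : z' ∈ upperTwins x y p)
    (hw : IsPartner x y z w) (hx : x z = x z') (hy : y z < y z') : z' ∉ boxLine x y w z := by
  obtain ⟨q, hq⟩ := h.exists_notMem (fun hzz => hy.ne (congrArg y hzz))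
  have hqz' := mem_neQuadrant_of_notMem_of_eq_of_lt hz' hx hy hq
  rw [mem_boxLine_of_eq_of_lt hx hy] at hq
  have hqz : z ∈ seQuadrant x y q := by grind
  obtain ⟨hwz, hmin⟩ := hw.resolve_right fun hcon => hcon.1 q hqz
  refine hw.notMem_of_mem_neQuadrant_left ⟨?_, ?_⟩
  · exact hx ▸ hwz.1
  · exact (hmin q hqz).trans_lt hqz'.2

theorem leftUnique_isTwinLine (h : NoUniversalLine x y) : LeftUnique (IsTwinLine x y p) := by
  rintro z z' l ⟨hz, w, hw, rfl⟩ ⟨hz', w', hw', hl⟩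
  wlog hlex : x z < x z' ∨ x z = x z' ∧ y z ≤ y z' generalizing z w z' w'
  · exact (this hz' w' hw' hz w hw hl.symm (by grind)).symm
  rcases hlex with hx | ⟨hx, hy⟩
  · rcases lt_trichotomy (y z) (y z') with hy | hy | hy
    · exact absurd (hl ▸ right_mem_boxLine w z) (hw'.notMem_of_mem_neQuadrant_right ⟨hx, hy⟩)
    · exact absurd hl (boxLine_ne_of_lt_of_eq h hz' hw hw' hx hy)
    · exact absurd hl (boxLine_ne_of_mem_seQuadrant hz hw hw' ⟨hx, hy⟩)
  · rcases hy.eq_or_lt with hy | hy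
    · exact h.eq_of_coords hx hy
    · exact absurd (hl ▸ right_mem_boxLine w' z') (notMem_boxLine_of_eq_of_lt h hz' hw hx hy)

theorem IsTwinLine.mem_linesAvoiding (hl : IsTwinLine x y p z l) : l ∈ linesAvoiding x y p := by
  obtain ⟨hz, w, hw, rfl⟩ := hl
  refine ⟨⟨w, z, ?_, rfl⟩, hw.notMem_of_mem_neQuadrant_right hz.1⟩
  rintro rfl
  rcases hw with ⟨hw, -⟩ | ⟨-, hw, -⟩ <;> exact lt_irrefl _ hw.1

theorem IsTwinLine.not_isTwinLine_toDual (hl : IsTwinLine x y p z l) :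
    ¬ IsTwinLine x (toDual ∘ y) p d l := by
  rintro ⟨hd, w', hw', hl'⟩
  obtain ⟨hz, w, hw, rfl⟩ := hl
  have hdz : Comparable x (toDual ∘ y) z d :=
    (hw.mem_boxLine_iff.1 (hl' ▸ right_mem_boxLine w' d)).2
  have hzd : Comparable x y d z := (hw'.mem_boxLine_iff.1 (hl' ▸ right_mem_boxLine w z)).2
  obtain ⟨hz, z₀, hz₀, hx, hy, htwin⟩ := hz
  have := htwin d
  have hd := hd.1
  rw [comparable_toDual] at hdz
  rw [neQuadrant_toDual] at hd
  grind [Comparable]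

end TwinLines

/-! ### Counting -/

section Counting

theorem leftUnique_isBaseLine {S : Set ι} (hS : InjOn (boxLine x y p) S) :
    LeftUnique (IsBaseLine x y p S) := by
  rintro a b l ⟨ha, rfl⟩ ⟨hb, hl⟩
  exact hS ha hb hl

theorem IsBaseLine.mem_linesThrough {S : Set ι} (hp : p ∉ S) (hl : IsBaseLine x y p S z l) :
    l ∈ linesThrough x y p := by
  obtain ⟨hz, rfl⟩ := hl
  exact ⟨⟨p, z, fun hpz => hp (hpz ▸ hz), rfl⟩, left_mem_boxLine p z⟩

theorem boxLines_toDual : boxLines x (toDual ∘ y) = boxLines x y := by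
  simp only [boxLines, boxLine_toDual]

theorem linesThrough_toDual : linesThrough x (toDual ∘ y) p = linesThrough x y p := by
  simp only [linesThrough, boxLines_toDual]

theorem linesAvoiding_toDual : linesAvoiding x (toDual ∘ y) p = linesAvoiding x y p := by
  simp only [linesAvoiding, boxLines_toDual]

theorem ncard_boxLines [Finite ι] (p : ι) :
    (boxLines x y).ncard = (linesThrough x y p).ncard + (linesAvoiding x y p).ncard :=
  (ncard_inter_add_ncard_sdiff_eq_ncard (boxLines x y) {l | p ∈ l} (toFinite _)).symm

theorem linesAvoiding_nonempty [Nontrivial ι] (h : NoUniversalLine x y) (p : ι) :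
    (linesAvoiding x y p).Nonempty := by
  obtain ⟨u, hu⟩ := exists_ne p
  obtain ⟨w, hw⟩ := h.exists_notMem hu.symm
  refine ⟨boxLine x y u w, ⟨u, w, ?_, rfl⟩, mt mem_boxLine_rotate.2 hw⟩
  rintro rfl
  exact hw (right_mem_boxLine p u)

theorem ncard_upperTwins_le [Finite ι] (h : NoUniversalLine x y) (p : ι) :
    (upperTwins x y p ∪ upperTwins x (toDual ∘ y) p).ncard ≤ (linesAvoiding x y p).ncard := by
  have hR : LeftUnique (IsTwinLine x y p ⊔ IsTwinLine x (toDual ∘ y) p) :=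
    leftUnique_sup (leftUnique_isTwinLine h) (leftUnique_isTwinLine h.toDual)
      fun _ _ _ hl => hl.not_isTwinLine_toDual
  have hmem (z : ι) (l : Set ι) : (IsTwinLine x y p ⊔ IsTwinLine x (toDual ∘ y) p) z l →
      l ∈ linesAvoiding x y p := by
    rintro (hl | hl)
    · exact hl.mem_linesAvoiding
    · exact linesAvoiding_toDual (x := x) (y := y) ▸ hl.mem_linesAvoiding
  refine (ncard_le_ncard ?_ (toFinite _)).trans (ncard_le_of_leftUnique hR hmem (toFinite _))
  rintro z (hz | hz)
  · obtain ⟨w, hw⟩ := exists_isPartner h hz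
    exact ⟨_, Or.inl ⟨hz, w, hw, rfl⟩⟩
  · obtain ⟨w, hw⟩ := exists_isPartner h.toDual hz
    exact ⟨_, Or.inr ⟨hz, w, hw, rfl⟩⟩

/-- Each line through `p` serves at most two points, one for each relation, and each line avoiding
`p` at most one twin. The point `p` itself is paid for by any line avoiding it. -/
theorem card_le_of_leftUnique [Finite ι] [Nontrivial ι] (h : NoUniversalLine x y)
    {R₁ R₂ : ι → Set ι → Prop} (h₁ : LeftUnique R₁) (h₂ : LeftUnique R₂)
    (hR₁ : ∀ z l, R₁ z l → l ∈ linesThrough x y p) (hR₂ : ∀ z l, R₂ z l → l ∈ linesThrough x y p)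
    (hcover : ∀ z ≠ p, z ∉ upperTwins x y p → z ∉ upperTwins x (toDual ∘ y) p →
      (∃ l, R₁ z l) ∨ ∃ l, R₂ z l) :
    Nat.card ι ≤ 2 * (boxLines x y).ncard := by
  have huniv : (univ : Set ι) = {p} ∪ (upperTwins x y p ∪ upperTwins x (toDual ∘ y) p) ∪
      ({z | ∃ l, R₁ z l} ∪ {z | ∃ l, R₂ z l}) := by
    refine (eq_univ_of_forall fun z => ?_).symm
    have := hcover z
    grind
  have hcard : Nat.card ι ≤
      1 + (upperTwins x y p ∪ upperTwins x (toDual ∘ y) p).ncard +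
        ({z | ∃ l, R₁ z l}.ncard + {z | ∃ l, R₂ z l}.ncard) := by
    rw [← ncard_univ, huniv, ← ncard_singleton p]
    exact (ncard_union_le _ _).trans (add_le_add (ncard_union_le _ _) (ncard_union_le _ _))
  have hc₁ := ncard_le_of_leftUnique h₁ hR₁ (toFinite _)
  have hc₂ := ncard_le_of_leftUnique h₂ hR₂ (toFinite _)
  have htwins := ncard_upperTwins_le h p
  have hpos := (ncard_pos (toFinite _)).2 (linesAvoiding_nonempty h p)
  rw [ncard_boxLines p]
  omega

end Counting

/-! ### The two cases -/

section Cases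

theorem boxLine_ne_of_mem_neQuadrant_of_mem_seQuadrant (hp : ∀ w, x p ≤ x w)
    (hz : z ∈ neQuadrant x y p) (hz' : z' ∈ seQuadrant x y p) :
    boxLine x y p z ≠ boxLine x y p z' := fun hl =>
  disjoint_left.1 (disjoint_boxLine_seQuadrant hp hz) (hl ▸ right_mem_boxLine p z') hz'

theorem seQuadrant_subset_boxLine_column (hz : z ∈ column x y p) :
    seQuadrant x y p ⊆ boxLine x y p z := fun _ hd =>
  (mem_boxLine_of_eq_of_lt hz.1.symm hz.2).2 (Or.inr (Or.inl hd.2.le))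

theorem boxLine_column_ne_of_mem_neQuadrant (hp : ∀ w, x p ≤ x w)
    (hd : (seQuadrant x y p).Nonempty) (hz : z ∈ column x y p) (hz' : z' ∈ neQuadrant x y p) :
    boxLine x y p z ≠ boxLine x y p z' := by
  intro hl
  obtain ⟨d, hd⟩ := hd
  exact disjoint_left.1 (disjoint_boxLine_seQuadrant hp hz')
    (hl ▸ seQuadrant_subset_boxLine_column hz hd) hd

theorem boxLine_column_ne_of_mem_seQuadrant (hp : ∀ w, x p ≤ x w)
    (hu : u ∈ neQuadrant x y p) (hzu : y z ≤ y u) (hz : z ∈ column x y p)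
    (hz' : z' ∈ seQuadrant x y p) :
    boxLine x y p z ≠ boxLine x y p z' := by
  intro hl
  have huz : u ∈ boxLine x y p z :=
    (mem_boxLine_of_eq_of_lt hz.1.symm hz.2).2 (Or.inr (Or.inr hzu))
  exact disjoint_left.1 (disjoint_boxLine_neQuadrant hp hz') (hl ▸ huz) hu

theorem not_isMiddleLine_boxLine_of_mem_quadrant (h : NoUniversalLine x y)
    (hp : ∀ w, x p ≤ x w) (hz : z ∈ neQuadrant x y p ∪ seQuadrant x y p) :
    ¬ IsMiddleLine x y p z' (boxLine x y p z) := by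
  intro hl
  rcases hz with hz | hz
  · obtain ⟨d, hdl, hd⟩ := hl.exists_mem_seQuadrant h hp
    exact disjoint_left.1 (disjoint_boxLine_seQuadrant hp hz) hdl hd
  · exact disjoint_left.1 (disjoint_boxLine_neQuadrant hp hz) hl.mem.1 hl.mem.2

theorem mem_column_or_mem_row_or_mem_quadrant (h : NoUniversalLine x y) (hp : ∀ w, x p ≤ x w)
    (hcol : ∀ v, x v = x p → y p ≤ y v) (hz : z ≠ p) :
    z ∈ column x y p ∨ z ∈ column y x p ∨ z ∈ neQuadrant x y p ∨ z ∈ seQuadrant x y p := by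
  have := hp z
  have := hcol z
  have := mt (h.eq_of_coords (u := z) (v := p)) 
  grind

theorem leftUnique_columnFirsts (h : NoUniversalLine x y) (hp : ∀ w, x p ≤ x w)
    (hd : (seQuadrant x y p).Nonempty) (hu : u ∈ neQuadrant x y p)
    (htop : ∀ v, x v = x p → y v ≤ y u) :
    LeftUnique (IsBaseLine x y p (column x y p ∪ (firsts x y p ∪ firsts x (toDual ∘ y) p)) ⊔
      IsMiddleLine x y p) := by
  have hfirsts := injOn_firsts h.toDual hp
  rw [boxLine_toDual] at hfirsts
  refine leftUnique_sup (leftUnique_isBaseLine (injOn_union_of_ne (injOn_column h)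
    (injOn_union_of_ne (injOn_firsts h hp) hfirsts ?_) ?_)) (leftUnique_isMiddleLine h hp) ?_
  · exact fun a ha b hb => boxLine_ne_of_mem_neQuadrant_of_mem_seQuadrant hp ha.1.1 hb.1.1
  · rintro a ha b (hb | hb)
    · exact boxLine_column_ne_of_mem_neQuadrant hp hd ha hb.1.1
    · exact boxLine_column_ne_of_mem_seQuadrant hp hu (htop a ha.1) ha hb.1.1
  · rintro a b l ⟨ha | ha, rfl⟩ hl
    · exact hl.not_seQuadrant_subset h hp (seQuadrant_subset_boxLine_column ha)
    · exact not_isMiddleLine_boxLine_of_mem_quadrant h hp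
        (ha.imp (fun ha => ha.1.1) fun ha => ha.1.1) hl

theorem leftUnique_rowLasts (h : NoUniversalLine x y) (hp : ∀ w, x p ≤ x w) :
    LeftUnique (IsBaseLine x y p (column y x p ∪ (lasts x y p ∪ lasts x (toDual ∘ y) p)) ⊔
      IsMiddleLine x (toDual ∘ y) p) := by
  have hlasts := injOn_lasts h.toDual hp
  rw [boxLine_toDual] at hlasts
  refine leftUnique_sup (leftUnique_isBaseLine (injOn_union_of_ne (injOn_row h)
    (injOn_union_of_ne (injOn_lasts h hp) hlasts ?_) ?_)) (leftUnique_isMiddleLine h.toDual hp) ?_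
  · exact fun a ha b hb => boxLine_ne_of_mem_neQuadrant_of_mem_seQuadrant hp ha.1.1 hb.1.1
  · rintro a ha b (hb | hb)
    · exact boxLine_row_ne_lasts h hp ha hb
    · rw [← boxLine_toDual]
      exact boxLine_row_ne_lasts h.toDual hp ha hb
  · rintro a b l ⟨ha, rfl⟩ hl
    rw [← boxLine_toDual] at hl
    rcases ha with ha | ha
    · exact not_isMiddleLine_boxLine_row h.toDual hp ha hl
    · exact not_isMiddleLine_boxLine_of_mem_quadrant h.toDual hp
        (ha.symm.imp (fun ha => ha.1.1) fun ha => ha.1.1) hl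

theorem card_le_of_quadrants_nonempty [Finite ι] [Nontrivial ι] (h : NoUniversalLine x y)
    (hp : ∀ w, x p ≤ x w) (hcol : ∀ v, x v = x p → y p ≤ y v)
    (hd : (seQuadrant x y p).Nonempty) (hu : u ∈ neQuadrant x y p)
    (htop : ∀ v, x v = x p → y v ≤ y u) : Nat.card ι ≤ 2 * (boxLines x y).ncard := by
  refine card_le_of_leftUnique (p := p) h (leftUnique_columnFirsts h hp hd hu htop)
    (leftUnique_rowLasts h hp) ?_ ?_ fun z hz hup hdown => ?_
  · rintro z l (hl | hl)
    · exact hl.mem_linesThrough (by grind [firsts, core])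
    · exact hl.mem_linesThrough
  · rintro z l (hl | hl)
    · exact hl.mem_linesThrough (by grind [lasts, core])
    · exact linesThrough_toDual (x := x) (y := y) ▸ hl.mem_linesThrough
  · rcases mem_column_or_mem_row_or_mem_quadrant h hp hcol hz with hz | hz | hz | hz
    · exact Or.inl ⟨_, Or.inl ⟨Or.inl hz, rfl⟩⟩
    · exact Or.inr ⟨_, Or.inl ⟨Or.inl hz, rfl⟩⟩
    · rcases mem_firsts_or_mem_lasts_or_isMiddleLine ⟨hz, hup⟩ with hz | hz | ⟨l, hl⟩
      · exact Or.inl ⟨_, Or.inl ⟨Or.inr (Or.inl hz), rfl⟩⟩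
      · exact Or.inr ⟨_, Or.inl ⟨Or.inr (Or.inl hz), rfl⟩⟩
      · exact Or.inl ⟨l, Or.inr hl⟩
    · rcases mem_firsts_or_mem_lasts_or_isMiddleLine (y := toDual ∘ y) ⟨hz, hdown⟩ with
        hz | hz | ⟨l, hl⟩
      · exact Or.inl ⟨_, Or.inl ⟨Or.inr (Or.inr hz), rfl⟩⟩
      · exact Or.inr ⟨_, Or.inl ⟨Or.inr (Or.inr hz), rfl⟩⟩
      · exact Or.inr ⟨l, Or.inr hl⟩

/-- A point missing from the common line would lie in the box spanned by `p` and `z`, hence on that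
line. -/
theorem boxLine_row_ne_of_boxLine_column_eq {r : ι} (h : NoUniversalLine x y)
    (hp : ∀ w, x p ≤ x w) (hlow : ∀ w, y p ≤ y w) (hv : v ∈ column x y p)
    (hz : z ∈ neQuadrant x y p) (hvz : boxLine x y p v = boxLine x y p z) (hr : r ∈ column y x p) :
    boxLine x y p r ≠ boxLine x y p z := by
  intro hrz
  obtain ⟨w, hw⟩ := h.exists_notMem (fun hpz => hz.1.ne (congrArg x hpz))
  have hwv := hvz ▸ hw
  have hwr := hrz ▸ hw
  have hvl := hvz ▸ right_mem_boxLine p v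
  have hrl := hrz ▸ right_mem_boxLine p r
  rw [mem_boxLine_iff_of_mem_neQuadrant hp hz] at hw hvl hrl
  rw [mem_boxLine_of_eq_of_lt hv.1.symm hv.2] at hwv
  rw [mem_boxLine_of_lt_of_eq hr.2 hr.1.symm] at hwr
  have := hlow w
  grind [Comparable]

theorem card_le_of_corner [Finite ι] [Nontrivial ι] (h : NoUniversalLine x y)
    (hp : ∀ w, x p ≤ x w) (hlow : ∀ w, y p ≤ y w) : Nat.card ι ≤ 2 * (boxLines x y).ncard := by
  have hinj : InjOn (boxLine x y p) (core x y p) := by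
    intro z hz z' hz' hl
    wlog hx : x z ≤ x z' generalizing z z'
    · exact (this hz' hz hl.symm (le_of_not_ge hx)).symm
    by_contra hne
    obtain ⟨d, hd, -⟩ := exists_seQuadrant_between h hp hz hz' hl hne hx
    exact (hlow d).not_gt hd.2
  have h₁ : InjOn (boxLine x y p)
      (column x y p ∪ {z ∈ core x y p | boxLine x y p z ∉ boxLine x y p '' column x y p}) :=
    injOn_union_of_ne (injOn_column h) (hinj.mono (sep_subset _ _))
      fun a ha b hb hab => hb.2 ⟨a, ha, hab⟩
  have h₂ : InjOn (boxLine x y p)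
      (column y x p ∪ {z ∈ core x y p | boxLine x y p z ∈ boxLine x y p '' column x y p}) :=
    injOn_union_of_ne (injOn_row h) (hinj.mono (sep_subset _ _))
      fun a ha b ⟨hb, v, hv, hvb⟩ => boxLine_row_ne_of_boxLine_column_eq h hp hlow hv hb.1 hvb ha
  refine card_le_of_leftUnique (p := p) h (leftUnique_isBaseLine h₁) (leftUnique_isBaseLine h₂)
    (fun _ _ hl => hl.mem_linesThrough (by grind [core]))
    (fun _ _ hl => hl.mem_linesThrough (by grind [core])) fun z hz hup _ => ?_
  rcases mem_column_or_mem_row_or_mem_quadrant h hp (fun v _ => hlow v) hz with hz | hz | hz | hz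
  · exact Or.inl ⟨_, Or.inl hz, rfl⟩
  · exact Or.inr ⟨_, Or.inl hz, rfl⟩
  · by_cases hl : boxLine x y p z ∈ boxLine x y p '' column x y p
    · exact Or.inr ⟨_, Or.inr ⟨⟨hz, hup⟩, hl⟩, rfl⟩
    · exact Or.inl ⟨_, Or.inr ⟨⟨hz, hup⟩, hl⟩, rfl⟩
  · exact absurd hz.2 (hlow z).not_gt

theorem exists_leftmost_lowest [Finite ι] [Nonempty ι] (x : ι → α) (y : ι → β) :
    ∃ p, (∀ w, x p ≤ x w) ∧ ∀ w, x w = x p → y p ≤ y w := by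
  obtain ⟨p, hp⟩ := Finite.exists_min fun i => toLex (x i, y i)
  simp only [Prod.Lex.toLex_le_toLex] at hp
  exact ⟨p, fun w => by grind, fun w => by grind⟩

end Cases

/-! ### The L1 plane -/

section Plane

theorem rho_eq_add_iff (u z v : ℝ × ℝ) :
    rho u v = rho u z + rho z v ↔ InBox Prod.fst Prod.snd u z v := by
  have hreal (a b c : ℝ) : b ∈ uIcc a c ↔ |a - b| + |b - c| = |a - c| := by
    rw [← segment_eq_uIcc, mem_segment_iff_wbtw, ← dist_add_dist_eq_iff]
    rfl
  have hfst := abs_sub_le u.1 z.1 v.1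
  have hsnd := abs_sub_le u.2 z.2 v.2
  simp only [InBox, hreal, rho]
  constructor
  · intro h
    constructor <;> linarith
  · rintro ⟨h₁, h₂⟩
    linarith

theorem mem_lineThrough_iff {X : Finset (ℝ × ℝ)} {u v a : X} (huv : u ≠ v) :
    (a : ℝ × ℝ) ∈ lineThrough X u v ↔
      a ∈ boxLine (fun a : X => a.1.1) (fun a : X => a.1.2) u v := by
  rw [mem_boxLine]
  by_cases hau : a = u
  · simp [lineThrough, InBox, hau]
  by_cases hav : a = v
  · simp [lineThrough, InBox, hav]
  simp only [← Subtype.coe_ne_coe, ← Subtype.coe_inj] at huv hau hav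
  simp [lineThrough, MBtw, rho_eq_add_iff, InBox, huv, hau, hav, Ne.symm hau, Ne.symm hav]

theorem noUniversalLine_of_lineThrough_ne {X : Finset (ℝ × ℝ)}
    (h : ∀ u ∈ X, ∀ v ∈ X, u ≠ v → lineThrough X u v ≠ X) :
    NoUniversalLine (fun a : X => a.1.1) (fun a : X => a.1.2) := by
  intro u v huv huniv
  refine h u u.2 v v.2 (Subtype.coe_ne_coe.2 huv) (Finset.filter_true_of_mem fun a ha => ?_)
  refine (Finset.mem_filter.1 ((mem_lineThrough_iff (a := ⟨a, ha⟩) huv).2 ?_)).2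
  exact huniv ▸ mem_univ _

theorem ncard_boxLines_le_numLines (X : Finset (ℝ × ℝ)) :
    (boxLines (fun a : X => a.1.1) (fun a : X => a.1.2)).ncard ≤ numLines X := by
  rw [numLines, ← ncard_coe_finset]
  refine (ncard_le_ncard ?_ (toFinite _)).trans
    (ncard_image_le (f := fun l : Finset (ℝ × ℝ) => {a : X | a.1 ∈ l}) (toFinite _))
  rintro l ⟨u, v, huv, rfl⟩
  refine ⟨lineThrough X u v, ?_, ext fun a => mem_lineThrough_iff huv⟩
  exact Finset.mem_coe.2 (Finset.mem_image.2 ⟨(u, v), by simpa using huv, rfl⟩)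

end Plane

end BoxPlane

open BoxPlane in
theorem L1_many_lines_general {ι α β : Type*} [LinearOrder α] [LinearOrder β] [Finite ι]
    [Nontrivial ι] {x : ι → α} {y : ι → β} (h : NoUniversalLine x y) :
    Nat.card ι ≤ 2 * (boxLines x y).ncard := by
  obtain ⟨p, hp, hlow⟩ := exists_leftmost_lowest x y
  obtain ⟨q, hq, hhigh⟩ := exists_leftmost_lowest x (OrderDual.toDual ∘ y)
  by_cases hbot : ∀ w, y p ≤ y w
  · exact card_le_of_corner h hp hbot
  by_cases htop : ∀ w, y w ≤ y q
  · rw [← boxLines_toDual]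
    exact card_le_of_corner h.toDual hq htop
  push Not at hbot htop
  obtain ⟨d, hd⟩ := hbot
  obtain ⟨u, hu⟩ := htop
  have hpq : x q = x p := le_antisymm (hq p) (hp q)
  have hxd : x p < x d := (hp d).lt_of_ne fun hpd => (hlow d hpd.symm).not_gt hd
  have hxu : x p < x u := (hp u).lt_of_ne fun hpu => (hhigh u (hpu.symm.trans hpq.symm)).not_gt hu
  refine card_le_of_quadrants_nonempty (u := u) h hp hlow ⟨d, hxd, hd⟩
    ⟨hxu, (hlow q hpq).trans_lt hu⟩ fun v hv => ?_
  have hvq : y v ≤ y q := hhigh v (hv.trans hpq.symm)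
  exact hvq.trans hu.le

/-- A non-collinear set of `n ≥ 2` points in the plane with the L1 metric
induces at least `⌈n/2⌉` lines. -/
theorem L1_many_lines (X : Finset (ℝ × ℝ)) (n : ℕ) (hn : X.card = n) (h2 : 2 ≤ n)
    (huniv : ∀ u ∈ X, ∀ v ∈ X, u ≠ v → lineThrough X u v ≠ X) :
    (n + 1) / 2 ≤ numLines X := by
  have hcard : Nat.card X = n := by rw [Nat.card_eq_finsetCard, hn]
  have : Nontrivial X := Finite.one_lt_card_iff_nontrivial.1 (by omega)
  have hlines := L1_many_lines_general (BoxPlane.noUniversalLine_of_lineThrough_ne huniv)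
  have hnum := BoxPlane.ncard_boxLines_le_numLines X
  omega
end
end

section
/- Let X be a finite set of points in ℝ² with the L1 metric. If {p,q} and {a,b} are increasing pairs of points of X inducing the same line, ⟨p,q⟩ = ⟨a,b⟩, then any two of the four points p, q, a, b are comparable in the partial order ≤_I. -/
noncomputable section
open Classical

/-- `X` is non-collinear: no line induced by two distinct points of `X` equals `X`. -/
def NonCollinear (X : Finset (ℝ × ℝ)) : Prop :=
  ∀ u ∈ X, ∀ v ∈ X, u ≠ v → lineThrough X u v ≠ X

/-- `{p,q}` is an increasing pair. -/
def IncPair (p q : ℝ × ℝ) : Prop := 0 < (q.1 - p.1) * (q.2 - p.2)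

/-- `{p,q}` is a decreasing pair. -/
def DecPair (p q : ℝ × ℝ) : Prop := (q.1 - p.1) * (q.2 - p.2) < 0

/-- The partial order `≤_I`. -/
def leI (c d : ℝ × ℝ) : Prop := c.1 ≤ d.1 ∧ c.2 ≤ d.2

/-- `c <_I d`. -/
def ltI (c d : ℝ × ℝ) : Prop := leI c d ∧ c ≠ d

/-- The partial order `≤_D`. -/
def leD (c d : ℝ × ℝ) : Prop := c.1 ≤ d.1 ∧ d.2 ≤ c.2

/-- `c <_D d`. -/
def ltD (c d : ℝ × ℝ) : Prop := leD c d ∧ c ≠ d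

/-- `(p,q)` is a blue arrow of `X`. -/
def BlueArrow (X : Finset (ℝ × ℝ)) (p q : ℝ × ℝ) : Prop :=
  p ∈ X ∧ q ∈ X ∧ IncPair p q ∧ ltI p q ∧
  ∀ a b, a ∈ X → b ∈ X → IncPair a b → ltI a b →
    lineThrough X a b = lineThrough X p q → (ltI q b ∨ (q = b ∧ leI a p))

/-- `(p,q)` is a red arrow of `X`. -/
def RedArrow (X : Finset (ℝ × ℝ)) (p q : ℝ × ℝ) : Prop :=
  p ∈ X ∧ q ∈ X ∧ DecPair p q ∧ ltD p q ∧
  ∀ a b, a ∈ X → b ∈ X → DecPair a b → ltD a b →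
    lineThrough X a b = lineThrough X p q → (ltD q b ∨ (q = b ∧ leD a p))

/-- An arrow is a blue or a red arrow. -/
def Arrow (X : Finset (ℝ × ℝ)) (p q : ℝ × ℝ) : Prop :=
  BlueArrow X p q ∨ RedArrow X p q

/-- `a` is not an endpoint of any arrow of `X`. -/
def NotEndpoint (X : Finset (ℝ × ℝ)) (a : ℝ × ℝ) : Prop :=
  ∀ p q, Arrow X p q → a ≠ p ∧ a ≠ q

/-!
For the L1 metric, `ρ(u, v) = ρ(u, z) + ρ(z, v)` exactly when `z` lies in the box `[[u, v]]`. Hence,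
if both coordinates of `p` are strictly smaller than those of `q`, the line `⟨p, q⟩` consists of
points below `p`, points of the box `[p, q]`, and points above `q`, each of which is comparable with
both `p` and `q`. This applies to `a` and `b`, which lie on `⟨a, b⟩ = ⟨p, q⟩`.
-/

open Set

lemma leI_iff_le {c d : ℝ × ℝ} : leI c d ↔ c ≤ d :=
  Iff.rfl

lemma mem_uIcc_iff_abs_sub_eq_add {G : Type*} [AddCommGroup G] [LinearOrder G]
    [IsOrderedAddMonoid G] {a b c : G} : b ∈ uIcc a c ↔ |a - c| = |a - b| + |b - c| := by
  rw [← sub_add_sub_cancel a b c, abs_add_eq_add_abs_iff, mem_uIcc]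
  simp only [sub_nonneg, sub_nonpos]
  tauto

section UIcc

variable {α β : Type*} [LinearOrder α] [LinearOrder β] {u v m : α × β}

lemma left_le_of_mem_uIcc_of_fst_lt_of_snd_lt
    (hm : m ∈ uIcc u v) (h₁ : m.1 < v.1) (h₂ : m.2 < v.2) : u ≤ m :=
  ⟨(inf_le_iff.1 hm.1.1).resolve_right h₁.not_ge, (inf_le_iff.1 hm.1.2).resolve_right h₂.not_ge⟩

lemma le_right_of_mem_uIcc_of_fst_lt_of_snd_lt
    (hm : m ∈ uIcc u v) (h₁ : u.1 < m.1) (h₂ : u.2 < m.2) : m ≤ v :=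
  ⟨(le_sup_iff.1 hm.2.1).resolve_left h₁.not_ge, (le_sup_iff.1 hm.2.2).resolve_left h₂.not_ge⟩

end UIcc

lemma rho_comm (u v : ℝ × ℝ) : rho u v = rho v u := by
  simp only [rho, abs_sub_comm]

lemma rho_eq_rho_add_rho_iff {u z v : ℝ × ℝ} : rho u v = rho u z + rho z v ↔ z ∈ uIcc u v := by
  rw [uIcc_prod_eq, mem_prod, mem_uIcc_iff_abs_sub_eq_add, mem_uIcc_iff_abs_sub_eq_add]
  have tri₁ := abs_sub_le u.1 z.1 v.1
  have tri₂ := abs_sub_le u.2 z.2 v.2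
  simp only [rho]
  constructor
  · intro h
    constructor <;> linarith
  · rintro ⟨h₁, h₂⟩
    linarith

lemma MBtw.mem_uIcc {u z v : ℝ × ℝ} (h : MBtw u z v) : z ∈ uIcc u v :=
  rho_eq_rho_add_rho_iff.1 h.2.2.2

lemma MBtw.symm {u z v : ℝ × ℝ} (h : MBtw u z v) : MBtw v z u := by
  obtain ⟨huz, hzv, huv, hrho⟩ := h
  refine ⟨hzv.symm, huz.symm, huv.symm, ?_⟩
  rw [rho_comm v u, rho_comm v z, rho_comm z u, hrho, add_comm]

lemma mBtw_comm {u z v : ℝ × ℝ} : MBtw u z v ↔ MBtw v z u :=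
  ⟨MBtw.symm, MBtw.symm⟩

lemma left_mem_lineThrough {X : Finset (ℝ × ℝ)} {u v : ℝ × ℝ} (hu : u ∈ X) :
    u ∈ lineThrough X u v :=
  Finset.mem_filter.2 ⟨hu, .inl rfl⟩

lemma right_mem_lineThrough {X : Finset (ℝ × ℝ)} {u v : ℝ × ℝ} (hv : v ∈ X) :
    v ∈ lineThrough X u v :=
  Finset.mem_filter.2 ⟨hv, .inr (.inl rfl)⟩

lemma lineThrough_comm (X : Finset (ℝ × ℝ)) (u v : ℝ × ℝ) :
    lineThrough X u v = lineThrough X v u := by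
  ext z
  simp only [lineThrough, Finset.mem_filter, mBtw_comm]
  tauto

lemma incPair_iff {p q : ℝ × ℝ} :
    IncPair p q ↔ p.1 < q.1 ∧ p.2 < q.2 ∨ q.1 < p.1 ∧ q.2 < p.2 := by
  simp only [IncPair, mul_pos_iff, sub_pos, sub_neg]

lemma IncPair.symm {p q : ℝ × ℝ} (h : IncPair p q) : IncPair q p :=
  incPair_iff.2 (incPair_iff.1 h).symm

lemma IncPair.le_or_le {p q : ℝ × ℝ} (h : IncPair p q) : p ≤ q ∨ q ≤ p :=
  (incPair_iff.1 h).imp (fun h ↦ ⟨h.1.le, h.2.le⟩) (fun h ↦ ⟨h.1.le, h.2.le⟩)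

section Line

variable {X : Finset (ℝ × ℝ)} {p q z : ℝ × ℝ}

lemma le_or_mem_Icc_or_le_of_mem_lineThrough (h₁ : p.1 < q.1) (h₂ : p.2 < q.2)
    (hz : z ∈ lineThrough X p q) : z ≤ p ∨ z ∈ Icc p q ∨ q ≤ z := by
  have hpq : p ≤ q := ⟨h₁.le, h₂.le⟩
  rcases (Finset.mem_filter.1 hz).2 with rfl | rfl | hpzq | hzpq | hpqz
  · exact .inl le_rfl
  · exact .inr (.inr le_rfl)
  · exact .inr (.inl (uIcc_of_le hpq ▸ hpzq.mem_uIcc))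
  · exact .inl (left_le_of_mem_uIcc_of_fst_lt_of_snd_lt hzpq.mem_uIcc h₁ h₂)
  · exact .inr (.inr (le_right_of_mem_uIcc_of_fst_lt_of_snd_lt hpqz.mem_uIcc h₁ h₂))

lemma IncPair.left_comparable_of_mem_lineThrough (hpq : IncPair p q)
    (hz : z ∈ lineThrough X p q) : p ≤ z ∨ z ≤ p := by
  rcases incPair_iff.1 hpq with ⟨h₁, h₂⟩ | ⟨h₁, h₂⟩
  · rcases le_or_mem_Icc_or_le_of_mem_lineThrough h₁ h₂ hz with hzp | hmem | hqz
    · exact .inr hzp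
    · exact .inl hmem.1
    · exact .inl (le_trans ⟨h₁.le, h₂.le⟩ hqz)
  · rw [lineThrough_comm] at hz
    rcases le_or_mem_Icc_or_le_of_mem_lineThrough h₁ h₂ hz with hzq | hmem | hpz
    · exact .inr (hzq.trans ⟨h₁.le, h₂.le⟩)
    · exact .inr hmem.2
    · exact .inl hpz

lemma IncPair.right_comparable_of_mem_lineThrough (hpq : IncPair p q)
    (hz : z ∈ lineThrough X p q) : q ≤ z ∨ z ≤ q :=
  hpq.symm.left_comparable_of_mem_lineThrough (lineThrough_comm X p q ▸ hz)

end Line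

theorem increasing_pairs_same_line_comparable_general {X : Finset (ℝ × ℝ)} {p q a b : ℝ × ℝ}
    (hpq : IncPair p q) (hab : a ≤ b ∨ b ≤ a)
    (ha : a ∈ lineThrough X p q) (hb : b ∈ lineThrough X p q) :
    IsChain (· ≤ ·) ({p, q, a, b} : Set (ℝ × ℝ)) := by
  have chain_ab : IsChain (· ≤ ·) {a, b} := by
    refine IsChain.singleton.insert ?_
    rintro _ rfl -
    exact hab
  have chain_qab : IsChain (· ≤ ·) {q, a, b} := by
    refine chain_ab.insert ?_
    rintro _ (rfl | rfl) -
    · exact hpq.right_comparable_of_mem_lineThrough ha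
    · exact hpq.right_comparable_of_mem_lineThrough hb
  refine chain_qab.insert ?_
  rintro _ (rfl | rfl | rfl) -
  · exact hpq.le_or_le
  · exact hpq.left_comparable_of_mem_lineThrough ha
  · exact hpq.left_comparable_of_mem_lineThrough hb

/-- If two increasing pairs of points of `X` induce the same line, then any two
of the four points are comparable in `≤_I`. -/
theorem increasing_pairs_same_line_comparable (X : Finset (ℝ × ℝ)) (p q a b : ℝ × ℝ)
    (hp : p ∈ X) (hq : q ∈ X) (ha : a ∈ X) (hb : b ∈ X)
    (hpq : IncPair p q) (hab : IncPair a b)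
    (hline : lineThrough X p q = lineThrough X a b) :
    ∀ u ∈ ({p, q, a, b} : Set (ℝ × ℝ)), ∀ v ∈ ({p, q, a, b} : Set (ℝ × ℝ)),
      leI u v ∨ leI v u := by
  intro u hu v hv
  simp only [leI_iff_le]
  exact (increasing_pairs_same_line_comparable_general hpq hab.le_or_le
    (hline ▸ left_mem_lineThrough ha) (hline ▸ right_mem_lineThrough hb)).total hu hv
end
end

section
/- Let X be a finite set of points in ℝ² with the L1 metric. Suppose X is non-collinear. If a ∈ X is not an endpoint of any arrow, then either the second quadrant of a or the third quadrant of a contains no points of X. -/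
noncomputable section
open Classical

/-!
Suppose both left quadrants of `a` contain points of `X`, and let `c` be a rightmost such point; by
reflection in the horizontal axis, `c` may be taken in the third quadrant. Let `d` be a lowest point
in the second quadrant. If a decreasing pair with head `v ≠ a` preceding `a` induced the line of
`d, a`, then `v` would lie to the right of `c`, which is off that line, so `v` would be directly
left of `a` or directly above it. The line of `v, a` misses some point of `X`, and that point would
contradict the choice of `c`, the choice of `d`, or the equality of the two lines. Hence `a` is the
least head inducing the line of `d, a`, and is the head of a red arrow.
-/

section Lines

variable {X : Finset (ℝ × ℝ)} {u v z : ℝ × ℝ}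

lemma abs_sub_eq_add_iff_mem_uIcc {x y t : ℝ} :
    |x - y| = |x - t| + |t - y| ↔ t ∈ Set.uIcc x y := by
  simp only [← Real.dist_eq]
  rw [eq_comm, dist_add_dist_eq_iff, ← mem_segment_iff_wbtw, segment_eq_uIcc]

lemma rho_eq_add_iff_mem_uIcc : rho u v = rho u z + rho z v ↔ z ∈ Set.uIcc u v := by
  rw [Set.uIcc_prod_eq, Set.mem_prod, ← abs_sub_eq_add_iff_mem_uIcc,
    ← abs_sub_eq_add_iff_mem_uIcc]
  have hx := abs_sub_le u.1 z.1 v.1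
  have hy := abs_sub_le u.2 z.2 v.2
  unfold rho
  constructor
  · intro h
    constructor <;> linarith
  · rintro ⟨h₁, h₂⟩
    linarith

lemma mem_lineThrough_iff (huv : u ≠ v) :
    z ∈ lineThrough X u v ↔
      z ∈ X ∧ (z ∈ Set.uIcc u v ∨ u ∈ Set.uIcc z v ∨ v ∈ Set.uIcc u z) := by
  have left_mem := Set.left_mem_uIcc (a := u) (b := v)
  have right_mem := Set.right_mem_uIcc (a := u) (b := v)
  simp only [lineThrough, Finset.mem_filter, MBtw, rho_eq_add_iff_mem_uIcc]
  grind

lemma NonCollinear.exists_notMem_lineThrough (hX : NonCollinear X) (hu : u ∈ X) (hv : v ∈ X)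
    (huv : u ≠ v) : ∃ z ∈ X, z ∉ lineThrough X u v := by
  by_contra! h
  exact hX u hu v hv huv ((Finset.filter_subset _ _).antisymm h)

lemma NonCollinear.exists_fst_between (hX : NonCollinear X) (hu : u ∈ X) (hv : v ∈ X)
    (hfst : u.1 < v.1) (hsnd : u.2 = v.2) : ∃ z ∈ X, u.1 < z.1 ∧ z.1 < v.1 ∧ z.2 ≠ v.2 := by
  have huv : u ≠ v := fun h => hfst.ne (congrArg Prod.fst h)
  obtain ⟨z, hz, hzuv⟩ := hX.exists_notMem_lineThrough hu hv huv
  simp only [mem_lineThrough_iff huv, Set.uIcc_prod_eq, Set.mem_prod, Set.mem_uIcc] at hzuv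
  exact ⟨z, hz, by grind⟩

lemma NonCollinear.exists_snd_between (hX : NonCollinear X) (hu : u ∈ X) (hv : v ∈ X)
    (hfst : u.1 = v.1) (hsnd : u.2 < v.2) : ∃ z ∈ X, u.2 < z.2 ∧ z.2 < v.2 ∧ z.1 ≠ v.1 := by
  have huv : u ≠ v := fun h => hsnd.ne (congrArg Prod.snd h)
  obtain ⟨z, hz, hzuv⟩ := hX.exists_notMem_lineThrough hu hv huv
  simp only [mem_lineThrough_iff huv, Set.uIcc_prod_eq, Set.mem_prod, Set.mem_uIcc] at hzuv
  exact ⟨z, hz, by grind⟩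

end Lines

section Decreasing

variable {X : Finset (ℝ × ℝ)} {p q z : ℝ × ℝ}

lemma decPair_and_ltD_iff : DecPair p q ∧ ltD p q ↔ p.1 < q.1 ∧ q.2 < p.2 := by
  simp only [DecPair, ltD, leD, mul_neg_iff, ne_eq, Prod.ext_iff]
  grind

lemma mem_lineThrough_iff_leD (hfst : p.1 < q.1) (hsnd : q.2 < p.2) :
    z ∈ lineThrough X p q ↔ z ∈ X ∧ (leD z p ∨ (leD p z ∧ leD z q) ∨ leD q z) := by
  have hpq : p ≠ q := fun h => hfst.ne (congrArg Prod.fst h)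
  simp only [mem_lineThrough_iff hpq, Set.uIcc_prod_eq, Set.mem_prod, Set.mem_uIcc, leD]
  grind

lemma exists_redArrow_of_forall_leD (hp : p ∈ X) (hq : q ∈ X) (hdec : DecPair p q)
    (hlt : ltD p q)
    (hleast : ∀ u ∈ X, ∀ v ∈ X, DecPair u v → ltD u v →
      lineThrough X u v = lineThrough X p q → leD q v) :
    ∃ r, RedArrow X r q := by
  let tails := X.filter fun r =>
    DecPair r q ∧ ltD r q ∧ lineThrough X r q = lineThrough X p q
  obtain ⟨r, hr, hmax⟩ := tails.exists_max_image (fun r => r.1 - r.2)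
    ⟨p, Finset.mem_filter.2 ⟨hp, hdec, hlt, rfl⟩⟩
  obtain ⟨hrX, hrdec, hrlt, hrline⟩ := Finset.mem_filter.1 hr
  refine ⟨r, hrX, hq, hrdec, hrlt, fun u v hu hv huvdec huvlt hline => ?_⟩
  have hqv := hleast u hu v hv huvdec huvlt (hline.trans hrline)
  rcases eq_or_ne q v with rfl | hne
  · have hur := hmax u (Finset.mem_filter.2 ⟨hu, huvdec, huvlt, hline.trans hrline⟩)
    have hrq := decPair_and_ltD_iff.1 ⟨hrdec, hrlt⟩
    have huq := decPair_and_ltD_iff.1 ⟨huvdec, huvlt⟩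
    have hmem : u ∈ lineThrough X r q := by
      rw [← hline]
      exact (mem_lineThrough_iff_leD huq.1 huq.2).2 ⟨hu, .inl ⟨le_rfl, le_rfl⟩⟩
    have hcomp := ((mem_lineThrough_iff_leD hrq.1 hrq.2).1 hmem).2
    refine .inr ⟨rfl, ?_⟩
    simp only [leD] at hcomp ⊢
    grind
  · exact .inl ⟨hqv, hne⟩

end Decreasing

/-- The open second quadrant of `a`. -/
def secondQuadrant (a : ℝ × ℝ) : Set (ℝ × ℝ) := {z | z.1 < a.1 ∧ a.2 < z.2}

/-- The open third quadrant of `a`. -/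
def thirdQuadrant (a : ℝ × ℝ) : Set (ℝ × ℝ) := {z | z.1 < a.1 ∧ z.2 < a.2}

section RedHead

variable {X : Finset (ℝ × ℝ)} {a c d u v : ℝ × ℝ}

lemma notMem_lineThrough_of_mem_thirdQuadrant (hd : d ∈ secondQuadrant a)
    (hc : c ∈ thirdQuadrant a) : c ∉ lineThrough X d a := by
  rw [mem_lineThrough_iff_leD hd.1 hd.2]
  simp only [secondQuadrant, thirdQuadrant, Set.mem_ofPred_eq] at hd hc
  simp only [leD]
  grind

lemma fst_lt_of_lineThrough_eq (hcX : c ∈ X) (hc : c ∈ thirdQuadrant a)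
    (hd : d ∈ secondQuadrant a) (hfst : u.1 < v.1) (hsnd : v.2 < u.2)
    (hline : lineThrough X u v = lineThrough X d a) (hva : leD v a) : c.1 < v.1 := by
  by_contra! hvc
  refine notMem_lineThrough_of_mem_thirdQuadrant (X := X) hd hc ?_
  rw [← hline, mem_lineThrough_iff_leD hfst hsnd]
  exact ⟨hcX, .inr (.inr ⟨hvc, hc.2.le.trans hva.2⟩)⟩

lemma snd_ne_of_fst_lt (hX : NonCollinear X) (ha : a ∈ X) (hv : v ∈ X)
    (hmax : ∀ z ∈ X, z ∈ secondQuadrant a ∪ thirdQuadrant a → z.1 ≤ c.1) (hcv : c.1 < v.1)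
    (hfst : v.1 < a.1) : v.2 ≠ a.2 := by
  intro hsnd
  obtain ⟨z, hz, hvz, hza, hne⟩ := hX.exists_fst_between hv ha hfst hsnd
  have hzQ : z ∈ secondQuadrant a ∪ thirdQuadrant a :=
    hne.lt_or_gt.symm.imp (⟨hza, ·⟩) (⟨hza, ·⟩)
  exact (hcv.trans hvz).not_ge (hmax z hz hzQ)

lemma snd_le_of_fst_eq (hX : NonCollinear X) (ha : a ∈ X) (hd : d ∈ secondQuadrant a)
    (hmin : ∀ z ∈ X, z ∈ secondQuadrant a → d.2 ≤ z.2) (hv : v ∈ X) (hfst : u.1 < v.1)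
    (hsnd : v.2 < u.2) (hline : lineThrough X u v = lineThrough X d a) (hvd : v.2 ≤ d.2)
    (hva : v.1 = a.1) : v.2 ≤ a.2 := by
  by_contra! hlt
  obtain ⟨z, hz, haz, hzv, hne⟩ := hX.exists_snd_between ha hv hva.symm hlt
  rcases hne.lt_or_gt with hleft | hright
  · exact (hzv.trans_le hvd).not_ge (hmin z hz ⟨hleft.trans_eq hva, haz⟩)
  · have hmem : z ∈ lineThrough X d a := by
      rw [← hline, mem_lineThrough_iff_leD hfst hsnd]
      exact ⟨hz, .inr (.inr ⟨hright.le, hzv.le⟩)⟩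
    rcases ((mem_lineThrough_iff_leD hd.1 hd.2).1 hmem).2 with hzd | ⟨-, hza⟩ | haz'
    · exact (hd.1.trans (hva ▸ hright)).not_ge hzd.1
    · exact (hva ▸ hright).not_ge hza.1
    · exact haz.not_ge haz'.2

lemma leD_head_of_lineThrough_eq (hX : NonCollinear X) (ha : a ∈ X) (hcX : c ∈ X)
    (hc : c ∈ thirdQuadrant a)
    (hmax : ∀ z ∈ X, z ∈ secondQuadrant a ∪ thirdQuadrant a → z.1 ≤ c.1)
    (hdX : d ∈ X) (hd : d ∈ secondQuadrant a)
    (hmin : ∀ z ∈ X, z ∈ secondQuadrant a → d.2 ≤ z.2) (hv : v ∈ X)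
    (hfst : u.1 < v.1) (hsnd : v.2 < u.2)
    (hline : lineThrough X u v = lineThrough X d a) : leD a v := by
  have hmem : v ∈ lineThrough X d a := by
    rw [← hline, mem_lineThrough_iff_leD hfst hsnd]
    exact ⟨hv, .inr (.inr ⟨le_rfl, le_rfl⟩)⟩
  have hdc : d.1 ≤ c.1 := hmax d hdX (.inl hd)
  rcases ((mem_lineThrough_iff_leD hd.1 hd.2).1 hmem).2 with hvd | ⟨hdv, hva⟩ | hav
  · have hcv := fst_lt_of_lineThrough_eq hcX hc hd hfst hsnd hline
      ⟨hvd.1.trans hd.1.le, hd.2.le.trans hvd.2⟩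
    exact absurd (hcv.trans_le hvd.1) hdc.not_gt
  · have hcv := fst_lt_of_lineThrough_eq hcX hc hd hfst hsnd hline hva
    rcases hva.1.lt_or_eq with hlt | heq
    · have hne := snd_ne_of_fst_lt hX ha hv hmax hcv hlt
      have hvQ : v ∈ secondQuadrant a := ⟨hlt, hva.2.lt_of_ne hne.symm⟩
      exact absurd (hmax v hv (.inl hvQ)) hcv.not_ge
    · exact ⟨heq.ge, snd_le_of_fst_eq hX ha hd hmin hv hfst hsnd hline hdv.2 heq⟩
  · exact hav

lemma exists_redArrow_of_mem_thirdQuadrant (hX : NonCollinear X) (ha : a ∈ X) (hcX : c ∈ X)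
    (hc : c ∈ thirdQuadrant a)
    (hmax : ∀ z ∈ X, z ∈ secondQuadrant a ∪ thirdQuadrant a → z.1 ≤ c.1)
    (hne : ∃ z ∈ X, z ∈ secondQuadrant a) : ∃ p, RedArrow X p a := by
  obtain ⟨z, hzX, hz⟩ := hne
  obtain ⟨d, hd, hmin⟩ := (X.filter (· ∈ secondQuadrant a)).exists_min_image Prod.snd
    ⟨z, Finset.mem_filter.2 ⟨hzX, hz⟩⟩
  obtain ⟨hdX, hdQ⟩ := Finset.mem_filter.1 hd
  have hda := decPair_and_ltD_iff.2 hdQ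
  refine exists_redArrow_of_forall_leD hdX ha hda.1 hda.2 fun u _ v hv hdec hlt hline => ?_
  have huv := decPair_and_ltD_iff.1 ⟨hdec, hlt⟩
  exact leD_head_of_lineThrough_eq hX ha hcX hc hmax hdX hdQ
    (fun w hw hwQ => hmin w (Finset.mem_filter.2 ⟨hw, hwQ⟩)) hv huv.1 huv.2 hline

end RedHead

section Isometry

variable {X : Finset (ℝ × ℝ)} {e : ℝ × ℝ ≃ ℝ × ℝ}

lemma mBtw_map_iff (he : ∀ p q, rho (e p) (e q) = rho p q) {u z v : ℝ × ℝ} :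
    MBtw (e u) (e z) (e v) ↔ MBtw u z v := by
  simp only [MBtw, he, e.injective.ne_iff]

lemma lineThrough_map (he : ∀ p q, rho (e p) (e q) = rho p q) (u v : ℝ × ℝ) :
    lineThrough (X.map e.toEmbedding) (e u) (e v) = (lineThrough X u v).map e.toEmbedding := by
  ext z
  obtain ⟨w, rfl⟩ := e.surjective z
  simp only [lineThrough, Finset.mem_filter, Finset.mem_map_equiv, e.symm_apply_apply,
    e.injective.eq_iff, mBtw_map_iff he]

lemma NonCollinear.map (hX : NonCollinear X) (he : ∀ p q, rho (e p) (e q) = rho p q) :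
    NonCollinear (X.map e.toEmbedding) := by
  simp only [NonCollinear, Finset.forall_mem_map, Equiv.coe_toEmbedding, lineThrough_map he,
    e.injective.ne_iff, ne_eq, Finset.map_inj]
  exact hX

end Isometry

/-- Reflection in the horizontal axis, which exchanges increasing and decreasing pairs. -/
def reflect : ℝ × ℝ ≃ ℝ × ℝ := (Equiv.refl ℝ).prodCongr (Equiv.neg ℝ)

section Reflection

variable {X : Finset (ℝ × ℝ)} {a p q z : ℝ × ℝ}

lemma reflect_apply (p : ℝ × ℝ) : reflect p = (p.1, -p.2) := rfl

lemma rho_reflect (p q : ℝ × ℝ) : rho (reflect p) (reflect q) = rho p q := by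
  simp only [rho, reflect_apply, neg_sub_neg, abs_sub_comm q.2 p.2]

lemma decPair_reflect : DecPair (reflect p) (reflect q) ↔ IncPair p q := by
  simp only [DecPair, IncPair, reflect_apply, neg_sub_neg, ← neg_sub q.2 p.2, mul_neg,
    neg_lt_zero]

lemma leD_reflect : leD (reflect p) (reflect q) ↔ leI p q := by
  simp only [leD, leI, reflect_apply, neg_le_neg_iff]

lemma ltD_reflect : ltD (reflect p) (reflect q) ↔ ltI p q := by
  simp only [ltD, ltI, leD_reflect, reflect.injective.ne_iff]

lemma blueArrow_of_redArrow_reflect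
    (h : RedArrow (X.map reflect.toEmbedding) (reflect p) (reflect q)) : BlueArrow X p q := by
  have hmem {w : ℝ × ℝ} : reflect w ∈ X.map reflect.toEmbedding ↔ w ∈ X :=
    Finset.mem_map' reflect.toEmbedding
  obtain ⟨hp, hq, hdec, hlt, hleast⟩ := h
  refine ⟨hmem.1 hp, hmem.1 hq, decPair_reflect.1 hdec, ltD_reflect.1 hlt,
    fun u v hu hv hinc huv hline => ?_⟩
  have hline' : lineThrough (X.map reflect.toEmbedding) (reflect u) (reflect v) =
      lineThrough (X.map reflect.toEmbedding) (reflect p) (reflect q) := by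
    rw [lineThrough_map rho_reflect, lineThrough_map rho_reflect, hline]
  exact (hleast _ _ (hmem.2 hu) (hmem.2 hv) (decPair_reflect.2 hinc) (ltD_reflect.2 huv)
    hline').imp ltD_reflect.1 (And.imp (reflect.injective ·) leD_reflect.1)

lemma reflect_mem_secondQuadrant :
    reflect z ∈ secondQuadrant (reflect a) ↔ z ∈ thirdQuadrant a := by
  simp only [secondQuadrant, thirdQuadrant, Set.mem_ofPred_eq, reflect_apply, neg_lt_neg_iff]

lemma reflect_mem_thirdQuadrant :
    reflect z ∈ thirdQuadrant (reflect a) ↔ z ∈ secondQuadrant a := by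
  simp only [secondQuadrant, thirdQuadrant, Set.mem_ofPred_eq, reflect_apply, neg_lt_neg_iff]

lemma exists_blueArrow_of_mem_secondQuadrant {c : ℝ × ℝ} (hX : NonCollinear X) (ha : a ∈ X)
    (hcX : c ∈ X) (hc : c ∈ secondQuadrant a)
    (hmax : ∀ z ∈ X, z ∈ secondQuadrant a ∪ thirdQuadrant a → z.1 ≤ c.1)
    (hne : ∃ z ∈ X, z ∈ thirdQuadrant a) : ∃ p, BlueArrow X p a := by
  obtain ⟨z, hzX, hz⟩ := hne
  have hmem {w : ℝ × ℝ} (hw : w ∈ X) : reflect w ∈ X.map reflect.toEmbedding :=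
    Finset.mem_map_of_mem _ hw
  have hmax' : ∀ w ∈ X.map reflect.toEmbedding,
      w ∈ secondQuadrant (reflect a) ∪ thirdQuadrant (reflect a) → w.1 ≤ (reflect c).1 := by
    simp only [Finset.forall_mem_map, Equiv.coe_toEmbedding, Set.mem_union,
      reflect_mem_secondQuadrant, reflect_mem_thirdQuadrant]
    exact fun w hw hwQ => hmax w hw hwQ.symm
  obtain ⟨p, hp⟩ := exists_redArrow_of_mem_thirdQuadrant (hX.map rho_reflect) (hmem ha)
    (hmem hcX) (reflect_mem_thirdQuadrant.2 hc) hmax'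
    ⟨reflect z, hmem hzX, reflect_mem_secondQuadrant.2 hz⟩
  obtain ⟨r, rfl⟩ := reflect.surjective p
  exact ⟨r, blueArrow_of_redArrow_reflect hp⟩

end Reflection

theorem no_arrow_endpoint_empty_quadrant_general (X : Finset (ℝ × ℝ)) (a : ℝ × ℝ)
    (hnc : NonCollinear X) (haX : a ∈ X) (hhead : ∀ p, ¬Arrow X p a) :
    (∀ z ∈ X, z ∉ secondQuadrant a) ∨ (∀ z ∈ X, z ∉ thirdQuadrant a) := by
  by_contra! ⟨hsecond, hthird⟩
  obtain ⟨z, hzX, hz⟩ := hsecond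
  obtain ⟨c, hc, hmax⟩ := (X.filter (· ∈ secondQuadrant a ∪ thirdQuadrant a)).exists_max_image
    Prod.fst ⟨z, Finset.mem_filter.2 ⟨hzX, .inl hz⟩⟩
  obtain ⟨hcX, hcQ⟩ := Finset.mem_filter.1 hc
  replace hmax : ∀ w ∈ X, w ∈ secondQuadrant a ∪ thirdQuadrant a → w.1 ≤ c.1 :=
    fun w hw hwQ => hmax w (Finset.mem_filter.2 ⟨hw, hwQ⟩)
  rcases hcQ with hcQ | hcQ
  · obtain ⟨p, hp⟩ := exists_blueArrow_of_mem_secondQuadrant hnc haX hcX hcQ hmax hthird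
    exact hhead p (.inl hp)
  · obtain ⟨p, hp⟩ := exists_redArrow_of_mem_thirdQuadrant hnc haX hcX hcQ hmax ⟨z, hzX, hz⟩
    exact hhead p (.inr hp)

/-- If `X` is non-collinear and `a ∈ X` is not the endpoint of any arrow, then
the second or the third quadrant of `a` contains no point of `X`. -/
theorem no_arrow_endpoint_empty_quadrant (X : Finset (ℝ × ℝ)) (a : ℝ × ℝ)
    (hnc : NonCollinear X) (haX : a ∈ X) (hiso : NotEndpoint X a) :
    (∀ z ∈ X, ¬(z.1 < a.1 ∧ a.2 < z.2)) ∨ (∀ z ∈ X, ¬(z.1 < a.1 ∧ z.2 < a.2)) :=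
  no_arrow_endpoint_empty_quadrant_general X a hnc haX fun p hp => (hiso p a hp).2 rfl
end
end
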